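/- Let V, W ⊆ S^d be nonempty polybox codes such that V is a cover of W (i.e. W ⊑ V) and δ(V,W) ≤ 4. Then there exists w ∈ W such that one can pass by gluing and cutting from V to a polybox code V̄ which contains w. -/

import Mathlib

/- Common framework: polybox codes over a finite alphabet `S` with a
complementation `c : S → S` (an involution without fixed points). -/

namespace PolyboxPaper

variable {S : Type} [Fintype S] [DecidableEq S] {d : ℕ}

/-- Two words are dichotomous: they differ by complementation at some position. -/
def Dich (c : S → S) (v w : Fin d → S) : Prop := ∃ i, v i = c (w i)

instance (c : S → S) (v w : Fin d → S) : Decidable (Dich c v w) :=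
  decidable_of_iff (∃ i, v i = c (w i)) Iff.rfl

/-- A polybox code: every two distinct words are dichotomous. -/
def IsCode (c : S → S) (V : Finset (Fin d → S)) : Prop :=
  ∀ v ∈ V, ∀ w ∈ V, v ≠ w → Dich c v w

/-- A cube tiling code: a polybox code with `2 ^ d` words. -/
def CubeTiling (c : S → S) (V : Finset (Fin d → S)) : Prop :=
  IsCode c V ∧ V.card = 2 ^ d

/-- `v` and `w` form a twin pair in the `i`-th direction. -/
def TwinPair (c : S → S) (v w : Fin d → S) (i : Fin d) : Prop :=
  v i = c (w i) ∧ ∀ j, j ≠ i → v j = w j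

/-- A code is twin pair free if no two of its words form a twin pair. -/
def TwinPairFree (c : S → S) (V : Finset (Fin d → S)) : Prop :=
  ∀ v ∈ V, ∀ w ∈ V, ∀ i, ¬ TwinPair c v w i

/-- A single glue-and-cut operation: a twin pair `v, w` of `V` in the `i`-th
direction is replaced by a twin pair `q, t` in the `i`-th direction agreeing
with `v` (and `w`) at all positions `j ≠ i`. -/
def GCStep (c : S → S) (V W : Finset (Fin d → S)) : Prop :=
  ∃ (v w q t : Fin d → S) (i : Fin d), v ∈ V ∧ w ∈ V ∧ TwinPair c v w i ∧
    TwinPair c q t i ∧ (∀ j, j ≠ i → q j = v j) ∧ W = (V \ {v, w}) ∪ {q, t}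

/-- `W` is obtained from `V` by gluing and cutting (finite, possibly empty,
sequence of single glue-and-cut operations); equivalently, `V` and `W` are
strongly equivalent. -/
def GC (c : S → S) (V W : Finset (Fin d → S)) : Prop :=
  Relation.ReflTransGen (GCStep c) V W

/-- Passing from `V` to `W` by gluing and cutting keeping `Q` fixed:
every intermediate code contains `Q`. -/
def GCFix (c : S → S) (Q V W : Finset (Fin d → S)) : Prop :=
  Relation.ReflTransGen (fun A B => GCStep c A B ∧ Q ⊆ B) V W

/-- A realization: for each coordinate a map `f i : S → Set (X i)` taking
nonempty proper values and sending complementary letters to complementary sets. -/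
def IsRealization (c : S → S) (X : Fin d → Type) (f : ∀ i, S → Set (X i)) : Prop :=
  ∀ i s, (f i s).Nonempty ∧ f i s ≠ Set.univ ∧ f i (c s) = (f i s)ᶜ

/-- The box associated to a word by a realization. -/
def box {X : Fin d → Type} (f : ∀ i, S → Set (X i)) (v : Fin d → S) :
    Set (∀ i, X i) :=
  {x | ∀ i, x i ∈ f i (v i)}

/-- The word `w` is covered by the code `V` (`w ⊑ V`). -/
def CoveredWord (c : S → S) (w : Fin d → S) (V : Finset (Fin d → S)) : Prop :=
  ∀ (X : Fin d → Type) (f : ∀ i, S → Set (X i)), IsRealization c X f →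
    box f w ⊆ ⋃ v ∈ V, box f v

/-- `V ⊑ W`: every word of `V` is covered by `W`. -/
def Covered (c : S → S) (V W : Finset (Fin d → S)) : Prop :=
  ∀ v ∈ V, CoveredWord c v W

/-- Equivalent codes: `V ⊑ W` and `W ⊑ V`. -/
def Equivalent (c : S → S) (V W : Finset (Fin d → S)) : Prop :=
  Covered c V W ∧ Covered c W V

/-- `V ⊑̇ W`: `V ⊑ W` and no word of `V` belongs to any code obtained from `W`
by gluing and cutting. -/
def DotCovered (c : S → S) (V W : Finset (Fin d → S)) : Prop :=
  Covered c V W ∧ ∀ v ∈ V, ∀ W', GC c W W' → v ∉ W'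

/-- The density `δ(V, W)`. -/
noncomputable def delta (c : S → S) (V W : Finset (Fin d → S)) : ℕ∞ :=
  W.inf fun w => ((V.filter fun v => ¬ Dich c v w).card : ℕ∞)

/-- `C` is a minimal cover of the word `w`. -/
def MinCoverWord (c : S → S) (C : Finset (Fin d → S)) (w : Fin d → S) : Prop :=
  IsCode c C ∧ CoveredWord c w C ∧ ∀ q ∈ C, ¬ Dich c q w

/-- `C` is a minimal cover of the code `P`. -/
def MinCoverCode (c : S → S) (C P : Finset (Fin d → S)) : Prop :=
  IsCode c C ∧ Covered c P C ∧ ∀ q ∈ C, ∃ p ∈ P, ¬ Dich c q p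

/-- A simple polybox code. -/
def SimpleCode (c : S → S) (V : Finset (Fin d → S)) : Prop :=
  ∀ i : Fin d, ∃ s : S, ∀ v ∈ V, v i = s ∨ v i = c s

/-- A simple cube tiling code `{s₁, s₁'} × ⋯ × {s_d, s_d'}`. -/
def SimpleCubeTiling (c : S → S) (U : Finset (Fin d → S)) : Prop :=
  ∃ s : Fin d → S, ∀ v : Fin d → S, v ∈ U ↔ ∀ i, v i = s i ∨ v i = c (s i)

/-- Word whose first four coordinates are `x0 x1 x2 x3` and which agrees with
`r` elsewhere. -/
def specialWord (r : Fin d → S) (x0 x1 x2 x3 : S) : Fin d → S := fun i =>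
  if (i : ℕ) = 0 then x0 else if (i : ℕ) = 1 then x1 else if (i : ℕ) = 2 then x2
  else if (i : ℕ) = 3 then x3 else r i

/-- The special pair of 12-word codes (Theorem 1 of the paper). -/
def SpecialPair (c : S → S) (V W : Finset (Fin d → S)) : Prop :=
  ∃ (a b : S) (r : Fin d → S), a ≠ b ∧ a ≠ c b ∧
    V = {specialWord r a (c a) b (c b), specialWord r a b (c b) a,
         specialWord r a (c b) (c b) (c b), specialWord r (c a) a (c b) (c b),
         specialWord r (c a) (c a) a (c b), specialWord r (c a) b (c b) b,
         specialWord r b a b (c b), specialWord r b b b b,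
         specialWord r b (c b) (c a) b, specialWord r (c b) a b (c a),
         specialWord r (c b) (c a) b b, specialWord r (c b) (c b) (c b) b} ∧
    W = {specialWord r (c a) (c a) (c a) b, specialWord r (c a) b a (c a),
         specialWord r b a (c a) a, specialWord r a (c a) (c a) a,
         specialWord r (c a) a (c a) (c a), specialWord r a b b (c a),
         specialWord r b b a a, specialWord r a (c b) (c a) (c a),
         specialWord r (c b) a (c b) a, specialWord r (c b) (c a) a a,
         specialWord r (c b) (c b) a (c a), specialWord r b (c b) a (c b)}

/-- An isomorphism of `S^d`: a permutation of coordinates followed by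
position bijections commuting with complementation. -/
def IsIso (c : S → S) (Φ : (Fin d → S) → Fin d → S) : Prop :=
  ∃ (σ : Equiv.Perm (Fin d)) (h : Fin d → S → S),
    (∀ i, Function.Bijective (h i)) ∧ (∀ i s, h i (c s) = c (h i s)) ∧
    ∀ v i, Φ v i = h i (v (σ i))

/-- The pair `(V, W)` is, up to isomorphism, the special pair. -/
def SpecialPairUpToIso (c : S → S) (V W : Finset (Fin d → S)) : Prop :=
  ∃ Φ, IsIso c Φ ∧
    (SpecialPair c (V.image Φ) (W.image Φ) ∨ SpecialPair c (W.image Φ) (V.image Φ))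

/-! Only the words of `V` that are not dichotomous to `w` matter; call them the words meeting `w`.
In a suitable realization by bits the box of `w` becomes a discrete cube, dissected by the words
meeting `w` into subcubes; the one coming from `v` has relative volume `2⁻ᵏ`, where `k` is the
number of positions at which `v` and `w` differ. Hence `∑ 2⁻ᵏ = 1`.

A dissection into `n` words, `2 ≤ n ≤ 4`, contains a twin pair. If some word `p` has `k = 1`, with
the difference at the position `i`, then all the other words carry the complement of `p i` at `i`,
so they dissect the word got from `w` by writing that letter at `i`, and one inducts. Otherwise
`n = 4` and `k = 2` throughout; given `p`, each of the three other words is complementary to `p` at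
one of only two positions, so two of them share a letter there that `w` does not have, which leaves
them room to differ at one position only: they are twins.

Cutting that twin pair along the letter of `w` keeps `w` covered and lowers the number of words
meeting `w`. When a single word meets `w`, it is `w`. -/

section Hamming

variable {ι : Type*} [Fintype ι] {β : ι → Type*} [∀ i, DecidableEq (β i)] {v w : ∀ i, β i} {i : ι}

theorem hammingDist_update_add_one [DecidableEq ι] (h : v i ≠ w i) :
    hammingDist v (Function.update w i (v i)) + 1 = hammingDist v w := by
  have herase : ({j | v j ≠ Function.update w i (v i) j} : Finset ι) =
      ({j | v j ≠ w j} : Finset ι).erase i := by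
    ext j
    obtain rfl | hj := eq_or_ne j i <;> simp [*]
  rw [hammingDist, herase, Finset.card_erase_add_one (by simpa using h), hammingDist]

theorem eq_of_hammingDist_le_one (h : hammingDist v w ≤ 1) (hi : v i ≠ w i) {j : ι} (hj : j ≠ i) :
    v j = w j := by
  by_contra hvw
  exact hj (Finset.card_le_one.1 h j (by simpa using hvw) i (by simpa using hi))

end Hamming

section Words

variable {A : Type} {c : A → A} {v w u p q x z : Fin d → A} {i : Fin d}

theorem Dich.symm (hc : Function.Involutive c) (h : Dich c v w) : Dich c w v := by
  obtain ⟨i, hi⟩ := h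
  exact ⟨i, by rw [hi, hc]⟩

theorem isCode_iff_pairwise {V : Finset (Fin d → A)} :
    IsCode c V ↔ (V : Set (Fin d → A)).Pairwise (Dich c) :=
  ⟨fun h v hv w hw => h v hv w hw, fun h _ hv _ hw => h hv hw⟩

theorem IsCode.mono {V W : Finset (Fin d → A)} (hW : IsCode c W) (hVW : V ⊆ W) : IsCode c V :=
  fun v hv w hw => hW v (hVW hv) w (hVW hw)

theorem TwinPair.dich (h : TwinPair c p q i) : Dich c p q := ⟨i, h.1⟩

theorem exists_eq_compl_and_ne (hc : Function.Involutive c) (hp : ¬ Dich c p w)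
    (hq : ¬ Dich c q w) (hpq : Dich c p q) : ∃ i, q i = c (p i) ∧ p i ≠ w i ∧ q i ≠ w i := by
  obtain ⟨i, hi⟩ := hpq
  refine ⟨i, by rw [hi, hc], fun h => hq ⟨i, ?_⟩, fun h => hp ⟨i, by rw [hi, h]⟩⟩
  rw [← h, hi, hc]

theorem compl_apply_ne (hc : Function.Involutive c) (h : ¬ Dich c v w) (i : Fin d) :
    c (v i) ≠ w i := fun heq => h ⟨i, by rw [← heq, hc]⟩

theorem not_dich_update (hc' : ∀ s, c s ≠ s) (h : ¬ Dich c v w) (i : Fin d) :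
    ¬ Dich c v (Function.update w i (v i)) := by
  rintro ⟨j, hj⟩
  obtain rfl | hji := eq_or_ne j i
  · rw [Function.update_self] at hj
    exact hc' _ hj.symm
  · rw [Function.update_of_ne hji] at hj
    exact h ⟨j, hj⟩

theorem IsCode.dich_of_twinPair {V : Finset (Fin d → A)} (hc' : ∀ s, c s ≠ s)
    (hV : IsCode c V) (hv : v ∈ V) (hu : u ∈ V) (hvu : TwinPair c v u i) (hx : x ∈ V)
    (hxv : x ≠ v) (hxu : x ≠ u) (hz : ∀ j, j ≠ i → z j = v j) : Dich c x z := by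
  obtain ⟨j, hj⟩ := hV x hx v hv hxv
  obtain ⟨k, hk⟩ := hV x hx u hu hxu
  by_cases hji : j = i
  · by_cases hki : k = i
    · subst hji hki
      have hxvj : x k = v k := by rw [hk, hvu.1]
      exact absurd (hj.symm.trans hxvj) (hc' _)
    · exact ⟨k, by rw [hk, hz k hki, hvu.2 k hki]⟩
  · exact ⟨j, by rw [hj, hz j hji]⟩

theorem exists_twinPair_of_hammingDist_le_one [DecidableEq A] (hc : Function.Involutive c)
    (hp : ¬ Dich c p w) (hq : ¬ Dich c q w) (hpq : Dich c p q)
    (hp1 : hammingDist p w ≤ 1) (hq1 : hammingDist q w ≤ 1) : ∃ i, TwinPair c p q i := by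
  obtain ⟨i, hqp, hpw, hqw⟩ := exists_eq_compl_and_ne hc hp hq hpq
  refine ⟨i, by rw [hqp, hc], fun j hj => ?_⟩
  rw [eq_of_hammingDist_le_one hp1 hpw hj, eq_of_hammingDist_le_one hq1 hqw hj]

end Words

section GlueAndCut

variable {A : Type} [DecidableEq A] {c : A → A} {V V' : Finset (Fin d → A)}
  {v u w : Fin d → A} {i : Fin d}

theorem GCStep.isCode (hc : Function.Involutive c) (hc' : ∀ s, c s ≠ s) (h : GCStep c V V')
    (hV : IsCode c V) : IsCode c V' := by
  obtain ⟨v, u, q, t, i, hv, hu, hvu, hqt, hqv, rfl⟩ := h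
  have hsymm : Std.Symm (Dich (d := d) c) := ⟨fun _ _ => Dich.symm hc⟩
  have htv : ∀ j, j ≠ i → t j = v j := fun j hj => (hqt.2 j hj).symm.trans (hqv j hj)
  rw [isCode_iff_pairwise, Finset.coe_union, Set.pairwise_union_of_symm]
  refine ⟨isCode_iff_pairwise.1 (hV.mono Finset.sdiff_subset), ?_, ?_⟩
  · rw [Finset.coe_pair, Set.pairwise_pair_of_symm]
    exact fun _ => hqt.dich
  · intro x hx z hz _
    simp only [Finset.coe_sdiff, Finset.coe_pair, Set.mem_sdiff, Finset.mem_coe,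
      Set.mem_insert_iff, Set.mem_singleton_iff, not_or] at hx hz
    obtain ⟨hxV, hxv, hxu⟩ := hx
    refine hV.dich_of_twinPair hc' hv hu hvu hxV hxv hxu ?_
    rcases hz with rfl | rfl
    exacts [hqv, htv]

theorem GCStep.coveredWord (h : GCStep c V V') (hw : CoveredWord c w V) : CoveredWord c w V' := by
  obtain ⟨v, u, q, t, i, hv, hu, hvu, hqt, hqv, rfl⟩ := h
  intro X f hf x hx
  obtain ⟨y, hy, hxy⟩ := Set.mem_iUnion₂.1 (hw X f hf hx)
  rw [Set.mem_iUnion₂]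
  by_cases hyvu : y = v ∨ y = u
  · have hyq : ∀ j, j ≠ i → y j = q j := by
      intro j hj
      rcases hyvu with rfl | rfl
      exacts [(hqv j hj).symm, (hvu.2 j hj).symm.trans (hqv j hj).symm]
    have hx_off : ∀ j, j ≠ i → x j ∈ f j (q j) := fun j hj => hyq j hj ▸ hxy j
    by_cases hxi : x i ∈ f i (q i)
    · exact ⟨q, by simp, fun j => if hj : j = i then hj ▸ hxi else hx_off j hj⟩
    · rw [hqt.1, (hf i (t i)).2.2, Set.notMem_compl_iff] at hxi
      exact ⟨t, by simp, fun j => if hj : j = i then hj ▸ hxi else hqt.2 j hj ▸ hx_off j hj⟩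
  · exact ⟨y, by simp [hy, hyvu], hxy⟩

/-- The words of `V` whose boxes meet the box of `w` in every realization, i.e. those not
dichotomous to `w`; `delta c V W` is the least number of them over `w ∈ W`. -/
def meetingWords (c : A → A) (V : Finset (Fin d → A)) (w : Fin d → A) : Finset (Fin d → A) :=
  V.filter fun v => ¬ Dich c v w

theorem mem_meetingWords : v ∈ meetingWords c V w ↔ v ∈ V ∧ ¬ Dich c v w :=
  Finset.mem_filter

theorem minCoverWord_meetingWords (hV : IsCode c V) (hw : CoveredWord c w V) :
    MinCoverWord c (meetingWords c V w) w := by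
  refine ⟨hV.mono (Finset.filter_subset _ _), fun X f hf x hx => ?_, fun v hv =>
    (mem_meetingWords.1 hv).2⟩
  obtain ⟨v, hv, hxv⟩ := Set.mem_iUnion₂.1 (hw X f hf hx)
  refine Set.mem_iUnion₂.2 ⟨v, mem_meetingWords.2 ⟨hv, ?_⟩, hxv⟩
  rintro ⟨i, hi⟩
  have hxi := hxv i
  rw [hi, (hf i (w i)).2.2] at hxi
  exact hxi (hx i)

theorem exists_gcStep_card_meetingWords_lt (hc : Function.Involutive c) (hc' : ∀ s, c s ≠ s)
    (hv : v ∈ meetingWords c V w) (hu : u ∈ meetingWords c V w) (hvu : TwinPair c v u i) :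
    ∃ V', GCStep c V V' ∧ (meetingWords c V' w).card < (meetingWords c V w).card := by
  set q := Function.update v i (w i) with hq
  set t := Function.update v i (c (w i)) with ht
  have hqt : TwinPair c q t i := ⟨by simp [hq, ht, hc _], fun j hj => by simp [hq, ht, hj]⟩
  have hqv : ∀ j, j ≠ i → q j = v j := fun j hj => by simp [hq, hj]
  have htw : Dich c t w := ⟨i, by simp [ht]⟩
  refine ⟨(V \ {v, u}) ∪ {q, t}, ⟨v, u, q, t, i, (mem_meetingWords.1 hv).1,
    (mem_meetingWords.1 hu).1, hvu, hqt, hqv, rfl⟩, ?_⟩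
  have hsub : meetingWords c ((V \ {v, u}) ∪ {q, t}) w ⊆
      insert q (((meetingWords c V w).erase v).erase u) := by
    intro x hx
    have hxt : x ≠ t := by
      rintro rfl
      exact (mem_meetingWords.1 hx).2 htw
    simp only [mem_meetingWords, Finset.mem_union, Finset.mem_sdiff, Finset.mem_insert,
      Finset.mem_singleton, Finset.mem_erase] at hx ⊢
    tauto
  have huv : u ≠ v := by
    rintro rfl
    exact hc' _ hvu.1.symm
  calc (meetingWords c ((V \ {v, u}) ∪ {q, t}) w).card
      ≤ (((meetingWords c V w).erase v).erase u).card + 1 :=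
        (Finset.card_le_card hsub).trans (Finset.card_insert_le _ _)
    _ = ((meetingWords c V w).erase v).card :=
        Finset.card_erase_add_one (Finset.mem_erase.2 ⟨huv, hu⟩)
    _ < (meetingWords c V w).card := Finset.card_erase_lt_of_mem hv

end GlueAndCut

section Kraft

variable {A : Type} {c : A → A}

theorem exists_selector (hc : Function.Involutive c) (hc' : ∀ s, c s ≠ s) :
    ∃ ε : A → Bool, ∀ s, ε (c s) = !ε s := by
  classical
  let _ : LinearOrder A := linearOrderOfSTO WellOrderingRel
  refine ⟨fun s => decide (s < c s), fun s => ?_⟩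
  rcases (hc' s).lt_or_gt with h | h <;> simp [hc s, h, h.le]

variable [DecidableEq A] {ε : A → Bool} {w v u : Fin d → A}

/-- A realization by pairs of bits adapted to the word `w`: at each position the first bit decides
between the letter of `w` and its complement, and the second bit decides all the other pairs
simultaneously, according to the selector `ε`. Distinguishing those pairs from each other is
unnecessary, as only their intersections with the box of `w` are measured. -/
def bitRealization (c : A → A) (ε : A → Bool) (w : Fin d → A) (i : Fin d) (s : A) :
    Set (Bool × Bool) :=
  if s = w i ∨ s = c (w i) then {x | x.1 = ε s} else {x | x.2 = ε s}

theorem isRealization_bitRealization (hc : Function.Involutive c) (hε : ∀ s, ε (c s) = !ε s)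
    (w : Fin d → A) : IsRealization c (fun _ => Bool × Bool) (bitRealization c ε w) := by
  intro i s
  have hpair : (c s = w i ∨ c s = c (w i)) ↔ (s = w i ∨ s = c (w i)) := by
    rw [hc.eq_iff, hc.injective.eq_iff, or_comm]
  refine ⟨⟨(ε s, ε s), ?_⟩, (Set.ne_univ_iff_exists_notMem _).2 ⟨(!ε s, !ε s), ?_⟩, ?_⟩
  · unfold bitRealization
    split_ifs <;> rfl
  · unfold bitRealization
    split_ifs <;> simp
  · unfold bitRealization
    simp only [hpair, hε]
    split_ifs <;> ext x <;> simp [Bool.eq_not]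

/-- The trace of the box of `v` on the box of `w` under `bitRealization`, as a subcube of the cube
of second bits: it fixes the bits at the positions where `v` and `w` differ. -/
def subcube (ε : A → Bool) (w v : Fin d → A) : Finset (Fin d → Bool) :=
  Fintype.piFinset fun i => if v i = w i then Finset.univ else {ε (v i)}

theorem mem_subcube {b : Fin d → Bool} : b ∈ subcube ε w v ↔ ∀ i, v i ≠ w i → b i = ε (v i) := by
  simp only [subcube, Fintype.mem_piFinset]
  refine forall_congr' fun i => ?_
  split_ifs with h <;> simp [h]

theorem card_subcube (ε : A → Bool) (w v : Fin d → A) :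
    ((subcube ε w v).card : ℚ) = 2 ^ d * (1 / 2) ^ hammingDist v w := by
  have htwo : (2 : ℚ) ^ d = ∏ _i : Fin d, 2 := by simp
  rw [subcube, Fintype.card_piFinset, Nat.cast_prod, hammingDist, ← Finset.prod_const,
    Finset.prod_filter, htwo, ← Finset.prod_mul_distrib]
  refine Finset.prod_congr rfl fun i _ => ?_
  by_cases h : v i = w i <;> simp [h]

theorem disjoint_subcube (hc : Function.Involutive c) (hε : ∀ s, ε (c s) = !ε s)
    (hv : ¬ Dich c v w) (hu : ¬ Dich c u w) (hvu : Dich c v u) :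
    Disjoint (subcube ε w v) (subcube ε w u) := by
  obtain ⟨i, hi, hvw, huw⟩ := exists_eq_compl_and_ne hc hv hu hvu
  rw [Finset.disjoint_left]
  intro b hbv hbu
  have hb : ε (v i) = ε (u i) := (mem_subcube.1 hbv i hvw).symm.trans (mem_subcube.1 hbu i huw)
  rw [hi, hε] at hb
  simp at hb

/-- A code that dissects the box of `w` by volume: no word is dichotomous to `w`, and the relative
volumes `2⁻ᵏ`, `k` being the number of positions of difference from `w`, add up to `1`. Unlike
`MinCoverWord`, which implies it, this condition is stable under the change of `w` in
`IsDissection.erase`. -/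
structure IsDissection (c : A → A) (C : Finset (Fin d → A)) (w : Fin d → A) : Prop where
  isCode : IsCode c C
  not_dich : ∀ v ∈ C, ¬ Dich c v w
  sum_eq_one : ∑ v ∈ C, (1 / 2 : ℚ) ^ hammingDist v w = 1

theorem MinCoverWord.biUnion_subcube {C : Finset (Fin d → A)} (hc : Function.Involutive c)
    (hε : ∀ s, ε (c s) = !ε s) (h : MinCoverWord c C w) :
    C.biUnion (subcube ε w) = Finset.univ := by
  obtain ⟨-, hcov, hnd⟩ := h
  refine Finset.eq_univ_of_forall fun b => Finset.mem_biUnion.2 ?_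
  have hbw : (fun i => (ε (w i), b i)) ∈ box (bitRealization c ε w) w := by
    intro i
    simp [bitRealization]
  obtain ⟨v, hv, hbv⟩ := Set.mem_iUnion₂.1 (hcov _ _ (isRealization_bitRealization hc hε w) hbw)
  refine ⟨v, hv, mem_subcube.2 fun i hi => ?_⟩
  have hvi : ¬ (v i = w i ∨ v i = c (w i)) := not_or.2 ⟨hi, fun hdich => hnd v hv ⟨i, hdich⟩⟩
  simpa [bitRealization, hvi] using hbv i

theorem MinCoverWord.isDissection {C : Finset (Fin d → A)} (hc : Function.Involutive c)
    (hc' : ∀ s, c s ≠ s) (h : MinCoverWord c C w) : IsDissection c C w := by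
  obtain ⟨ε, hε⟩ := exists_selector hc hc'
  have hunion := h.biUnion_subcube hc hε
  obtain ⟨hC, -, hnd⟩ := h
  refine ⟨hC, hnd, ?_⟩
  have hdisj : (C : Set (Fin d → A)).PairwiseDisjoint (subcube ε w) := fun v hv u hu hvu =>
    disjoint_subcube hc hε (hnd v hv) (hnd u hu) (hC v hv u hu hvu)
  have hcard : (2 : ℚ) ^ d * ∑ v ∈ C, (1 / 2) ^ hammingDist v w = 2 ^ d := calc
    _ = ∑ v ∈ C, ((subcube ε w v).card : ℚ) := by simp only [Finset.mul_sum, card_subcube]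
    _ = ((C.biUnion (subcube ε w)).card : ℚ) := by rw [Finset.card_biUnion hdisj, Nat.cast_sum]
    _ = 2 ^ d := by simp [hunion]
  exact mul_left_cancel₀ (by positivity) (hcard.trans (mul_one _).symm)

end Kraft

namespace IsDissection

variable {A : Type} [DecidableEq A] {c : A → A} {C : Finset (Fin d → A)} {w p q : Fin d → A}
  {i : Fin d}

theorem mem_of_card_le_one (h : IsDissection c C w) (hcard : C.card ≤ 1) : w ∈ C := by
  have hne : C.Nonempty := by
    rw [Finset.nonempty_iff_ne_empty]
    rintro rfl
    simpa using h.sum_eq_one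
  obtain ⟨v, rfl⟩ := Finset.card_eq_one.1 (hcard.antisymm hne.card_pos)
  have hpow : (1 / 2 : ℚ) ^ hammingDist v w = 1 := by simpa using h.sum_eq_one
  have hdist : hammingDist v w = 0 := by
    by_contra h0
    exact (pow_lt_one₀ (by norm_num) (by norm_num) h0).ne hpow
  exact Finset.mem_singleton.2 (hammingDist_eq_zero.1 hdist).symm

theorem hammingDist_pos (hc : Function.Involutive c) (h : IsDissection c C w)
    (hcard : 2 ≤ C.card) (hp : p ∈ C) : 0 < hammingDist p w := by
  obtain ⟨q, hq, hqp⟩ := Finset.exists_mem_ne hcard p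
  obtain ⟨i, -, hpw, -⟩ := exists_eq_compl_and_ne hc (h.not_dich p hp) (h.not_dich q hq)
    (h.isCode p hp q hq hqp.symm)
  exact _root_.hammingDist_pos.2 fun heq => hpw (congrFun heq i)

theorem card_eq_two_pow_and_hammingDist_eq (h : IsDissection c C w) {k : ℕ}
    (hk : ∀ v ∈ C, k ≤ hammingDist v w) (hcard : C.card ≤ 2 ^ k) :
    C.card = 2 ^ k ∧ ∀ v ∈ C, hammingDist v w = k := by
  have hle : ∀ v ∈ C, (1 / 2 : ℚ) ^ hammingDist v w ≤ (1 / 2) ^ k := fun v hv =>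
    pow_le_pow_of_le_one (by norm_num) (by norm_num) (hk v hv)
  have hconst : ∑ _v ∈ C, (1 / 2 : ℚ) ^ k = C.card / 2 ^ k := by
    rw [Finset.sum_const, nsmul_eq_mul, one_div_pow, mul_one_div]
  have hge : (2 : ℚ) ^ k ≤ C.card := by
    rw [← one_le_div (by positivity), ← hconst]
    exact h.sum_eq_one.ge.trans (Finset.sum_le_sum hle)
  have hcard' : C.card = 2 ^ k := hcard.antisymm (by exact_mod_cast hge)
  have hsum : ∑ v ∈ C, (1 / 2 : ℚ) ^ hammingDist v w = ∑ _v ∈ C, (1 / 2) ^ k := by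
    rw [h.sum_eq_one, hconst, hcard', Nat.cast_pow, Nat.cast_ofNat, div_self (by positivity)]
  refine ⟨hcard', fun v hv => ?_⟩
  exact pow_right_injective₀ (by norm_num) (by norm_num)
    ((Finset.sum_eq_sum_iff_of_le hle).1 hsum v hv)

theorem apply_eq_compl (hc : Function.Involutive c) (h : IsDissection c C w) (hp : p ∈ C)
    (hp1 : hammingDist p w = 1) (hpi : p i ≠ w i) (hq : q ∈ C) (hqp : q ≠ p) :
    q i = c (p i) := by
  obtain ⟨j, hj, hpj, -⟩ := exists_eq_compl_and_ne hc (h.not_dich p hp) (h.not_dich q hq)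
    (h.isCode p hp q hq hqp.symm)
  obtain rfl : j = i := by
    by_contra hji
    exact hpj (eq_of_hammingDist_le_one hp1.le hpi hji)
  exact hj

theorem erase (hc : Function.Involutive c) (hc' : ∀ s, c s ≠ s) (h : IsDissection c C w)
    (hp : p ∈ C) (hp1 : hammingDist p w = 1) (hpi : p i ≠ w i) :
    IsDissection c (C.erase p) (Function.update w i (c (p i))) := by
  have hletter : ∀ q ∈ C.erase p, q i = c (p i) := fun q hq =>
    h.apply_eq_compl hc hp hp1 hpi (Finset.mem_of_mem_erase hq) (Finset.ne_of_mem_erase hq)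
  refine ⟨h.isCode.mono (Finset.erase_subset _ _), fun q hq => ?_, ?_⟩
  · rw [← hletter q hq]
    exact not_dich_update hc' (h.not_dich q (Finset.mem_of_mem_erase hq)) i
  · have hdist : ∀ q ∈ C.erase p,
        hammingDist q (Function.update w i (c (p i))) + 1 = hammingDist q w := fun q hq => by
      rw [← hletter q hq]
      exact hammingDist_update_add_one (hletter q hq ▸ compl_apply_ne hc (h.not_dich p hp) _)
    have hhalf : ∑ q ∈ C.erase p, (1 / 2 : ℚ) ^ hammingDist q w = 1 / 2 := by
      have hsum := Finset.add_sum_erase C (fun v => (1 / 2 : ℚ) ^ hammingDist v w) hp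
      rw [h.sum_eq_one, hp1] at hsum
      linarith
    calc ∑ q ∈ C.erase p, (1 / 2 : ℚ) ^ hammingDist q (Function.update w i (c (p i)))
        = ∑ q ∈ C.erase p, 2 * (1 / 2 : ℚ) ^ hammingDist q w :=
          Finset.sum_congr rfl fun q hq => by rw [← hdist q hq, pow_succ]; ring
      _ = 1 := by rw [← Finset.mul_sum, hhalf]; norm_num

theorem exists_twinPair_of_hammingDist_eq_two (hc : Function.Involutive c) (hc' : ∀ s, c s ≠ s)
    (h : IsDissection c C w) (hcard : C.card = 4) (htwo : ∀ v ∈ C, hammingDist v w = 2) :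
    ∃ p ∈ C, ∃ q ∈ C, ∃ i, TwinPair c p q i := by
  obtain ⟨p, hp⟩ : C.Nonempty := Finset.card_pos.1 (by omega)
  have hcompl : ∀ q : C.erase p, ∃ i ∈ ({i | p i ≠ w i} : Finset (Fin d)), q.1 i = c (p i) := by
    rintro ⟨q, hq⟩
    obtain ⟨hqp, hqC⟩ := Finset.mem_erase.1 hq
    obtain ⟨i, hi, hpw, -⟩ := exists_eq_compl_and_ne hc (h.not_dich p hp) (h.not_dich q hqC)
      (h.isCode p hp q hqC hqp.symm)
    exact ⟨i, by simpa using hpw, hi⟩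
  choose g hgp hgc using hcompl
  have hlt : ({i | p i ≠ w i} : Finset (Fin d)).card < (C.erase p).attach.card := by
    rw [Finset.card_attach, Finset.card_erase_of_mem hp, hcard]
    exact (htwo p hp).trans_lt (by norm_num)
  obtain ⟨q, -, r, -, hqr, hg⟩ :=
    Finset.exists_ne_map_eq_of_card_lt_of_maps_to hlt fun q _ => hgp q
  have hqC : q.1 ∈ C := Finset.mem_of_mem_erase q.2
  have hrC : r.1 ∈ C := Finset.mem_of_mem_erase r.2
  have hletter : q.1 (g q) = r.1 (g q) := by rw [hgc q, hg, hgc r]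
  have hqw : q.1 (g q) ≠ w (g q) := hgc q ▸ compl_apply_ne hc (h.not_dich p hp) _
  have hq2 := hammingDist_update_add_one hqw
  have hr2 := hammingDist_update_add_one (hletter ▸ hqw)
  rw [htwo _ hqC] at hq2
  rw [htwo _ hrC, ← hletter] at hr2
  refine ⟨q, hqC, r, hrC, exists_twinPair_of_hammingDist_le_one hc
    (not_dich_update hc' (h.not_dich q hqC) (g q)) ?_
    (h.isCode q hqC r hrC (Subtype.coe_ne_coe.2 hqr)) (by omega) (by omega)⟩
  rw [hletter]
  exact not_dich_update hc' (h.not_dich r hrC) (g q)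

theorem exists_twinPair (hc : Function.Involutive c) (hc' : ∀ s, c s ≠ s)
    (h : IsDissection c C w) (htwo : 2 ≤ C.card) (hfour : C.card ≤ 4) :
    ∃ p ∈ C, ∃ q ∈ C, ∃ i, TwinPair c p q i := by
  induction C using Finset.strongInduction generalizing w with
  | H C ih =>
  by_cases hone : ∃ p ∈ C, hammingDist p w = 1
  · obtain ⟨p, hp, hp1⟩ := hone
    obtain ⟨i, hpi⟩ := Function.ne_iff.1 (hammingDist_ne_zero.1 (by omega : hammingDist p w ≠ 0))
    have herase := h.erase hc hc' hp hp1 hpi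
    have hcard := Finset.card_erase_of_mem hp
    rcases htwo.eq_or_lt' with hC | hC
    · have hq := herase.mem_of_card_le_one (by omega)
      refine ⟨p, hp, _, Finset.mem_of_mem_erase hq, i, by simp [hc _], fun j hj => ?_⟩
      rw [Function.update_of_ne hj, eq_of_hammingDist_le_one hp1.le hpi hj]
    · obtain ⟨q, hq, r, hr, htwin⟩ :=
        ih _ (Finset.erase_ssubset hp) herase (by omega) (by omega)
      exact ⟨q, Finset.mem_of_mem_erase hq, r, Finset.mem_of_mem_erase hr, htwin⟩
  · push Not at hone
    have hge : ∀ v ∈ C, 2 ≤ hammingDist v w := fun v hv =>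
      (Nat.succ_le_of_lt (h.hammingDist_pos hc htwo hv)).lt_of_ne (hone v hv).symm
    obtain ⟨hcard, hdist⟩ := h.card_eq_two_pow_and_hammingDist_eq hge (by simpa using hfour)
    exact h.exists_twinPair_of_hammingDist_eq_two hc hc' (by simpa using hcard) hdist

end IsDissection

theorem CoveredWord.exists_gc_mem {A : Type} [DecidableEq A] {c : A → A}
    (hc : Function.Involutive c) (hc' : ∀ s, c s ≠ s) {V : Finset (Fin d → A)} {w : Fin d → A}
    (hV : IsCode c V) (hw : CoveredWord c w V) (hfour : (meetingWords c V w).card ≤ 4) :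
    ∃ V', GC c V V' ∧ w ∈ V' := by
  induction hn : (meetingWords c V w).card using Nat.strong_induction_on generalizing V with
  | _ n ih =>
  have hdiss := (minCoverWord_meetingWords hV hw).isDissection hc hc'
  rcases Nat.lt_or_ge 1 (meetingWords c V w).card with htwo | hone
  · obtain ⟨v, hv, u, hu, i, hvu⟩ := hdiss.exists_twinPair hc hc' htwo hfour
    obtain ⟨V₁, hstep, hlt⟩ := exists_gcStep_card_meetingWords_lt hc hc' hv hu hvu
    obtain ⟨V', hgc, hmem⟩ := ih _ (hn ▸ hlt) (hstep.isCode hc hc' hV) (hstep.coveredWord hw)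
      (hlt.le.trans hfour) rfl
    exact ⟨V', .head hstep hgc, hmem⟩
  · exact ⟨V, .refl, (mem_meetingWords.1 (hdiss.mem_of_card_le_one hone)).1⟩

theorem low_density_cover_reaches_some_word_general
    {S : Type} [DecidableEq S] (c : S → S)
    (hc : ∀ s, c (c s) = s) (hc' : ∀ s, c s ≠ s) {d : ℕ}
    (V W : Finset (Fin d → S)) (hV : IsCode c V)
    (hcov : Covered c W V) (hdelta : delta c V W ≤ 4) :
    ∃ w ∈ W, ∃ V' : Finset (Fin d → S), GC c V V' ∧ w ∈ V' := by
  obtain ⟨w, hw, hfour⟩ : ∃ w ∈ W, ((meetingWords c V w).card : ℕ∞) ≤ 4 :=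
    (Finset.inf_le_iff (by decide)).1 hdelta
  exact ⟨w, hw, (hcov w hw).exists_gc_mem hc hc' hV (by exact_mod_cast hfour)⟩

/-- Corollary "del4" of the paper. -/
theorem low_density_cover_reaches_some_word
    {S : Type} [Fintype S] [DecidableEq S] (c : S → S)
    (hc : ∀ s, c (c s) = s) (hc' : ∀ s, c s ≠ s) {d : ℕ}
    (V W : Finset (Fin d → S)) (hV : IsCode c V) (hW : IsCode c W)
    (hVne : V.Nonempty) (hWne : W.Nonempty)
    (hcov : Covered c W V) (hdelta : delta c V W ≤ 4) :
    ∃ w ∈ W, ∃ V' : Finset (Fin d → S), GC c V V' ∧ w ∈ V' :=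
  low_density_cover_reaches_some_word_general c hc hc' V W hV hcov hdelta

end PolyboxPaper
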